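/- For all ℓ, r ∈ {1,…,m−1} and all k, s ∈ {0,…,n}: if 0 ≤ s ≤ n − a_{ℓ+1} − 1 then α_{k,ℓ} · α_{s,r} = α_{0,r}; if n − a_{ℓ+1} ≤ s ≤ n − a_ℓ − 1 then α_{k,ℓ} · α_{s,r} = α_{k,r}; and if n − a_ℓ ≤ s ≤ n then α_{k,ℓ} · α_{s,r} = α_{n,r}. -/

import Mathlib

/-- Pointwise-max addition on endomorphisms of the chain `Fin N`. -/
def sAdd {N : ℕ} (f g : Fin N → Fin N) : Fin N → Fin N := fun i => max (f i) (g i)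

/-- Multiplication in diagram order: `(f·g)(i) = g (f i)`. -/
def sMul {N : ℕ} (f g : Fin N → Fin N) : Fin N → Fin N := fun i => g (f i)

/-- The element `α_k` of the string `STR{a,b}`: `α_k i = a` if `i ≤ N - k - 1`
    (equivalently `i + k < N`) and `α_k i = b` otherwise. -/
def alpha {N : ℕ} (a b : Fin N) (k : ℕ) : Fin N → Fin N :=
  fun i => if (i : ℕ) + k < N then a else b

/-!
Since `α_k` takes only the values `a` and `b`, following it by any `f` merely replaces these
values by `f a` and `f b`. For `f` the element `α_s` of `STR{c,d}`, the three ranges of `s` say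
whether the pair `(f a, f b)` is `(c, c)`, `(c, d)` or `(d, d)`, and `α_0`, `α_N` in
`STR{c,d}` are the constant maps `c`, `d`.
-/

section Alpha

variable {N : ℕ}

theorem sMul_alpha (a b : Fin N) (k : ℕ) (f : Fin N → Fin N) :
    sMul (alpha a b k) f = alpha (f a) (f b) k :=
  funext fun _ => apply_ite f _ _ _

theorem alpha_apply_of_lt (a b : Fin N) {k : ℕ} {i : Fin N} (h : (i : ℕ) + k < N) :
    alpha a b k i = a :=
  if_pos h

theorem alpha_apply_of_le (a b : Fin N) {k : ℕ} {i : Fin N} (h : N ≤ (i : ℕ) + k) :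
    alpha a b k i = b :=
  if_neg h.not_gt

theorem alpha_self (a : Fin N) (k : ℕ) : alpha a a k = fun _ => a :=
  funext fun _ => ite_self a

theorem alpha_zero (a b : Fin N) : alpha a b 0 = fun _ => a :=
  funext fun i => alpha_apply_of_lt a b i.isLt

theorem alpha_top (a b : Fin N) : alpha a b N = fun _ => b :=
  funext fun i => alpha_apply_of_le a b (Nat.le_add_left N i)

theorem sMul_alpha_alpha_of_lt_of_lt {a b : Fin N} (c d : Fin N) (k : ℕ) {s : ℕ}
    (ha : (a : ℕ) + s < N) (hb : (b : ℕ) + s < N) :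
    sMul (alpha a b k) (alpha c d s) = alpha c d 0 := by
  rw [sMul_alpha, alpha_apply_of_lt c d ha, alpha_apply_of_lt c d hb, alpha_self, alpha_zero]

theorem sMul_alpha_alpha_of_lt_of_le {a b : Fin N} (c d : Fin N) (k : ℕ) {s : ℕ}
    (ha : (a : ℕ) + s < N) (hb : N ≤ (b : ℕ) + s) :
    sMul (alpha a b k) (alpha c d s) = alpha c d k := by
  rw [sMul_alpha, alpha_apply_of_lt c d ha, alpha_apply_of_le c d hb]

theorem sMul_alpha_alpha_of_le_of_le {a b : Fin N} (c d : Fin N) (k : ℕ) {s : ℕ}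
    (ha : N ≤ (a : ℕ) + s) (hb : N ≤ (b : ℕ) + s) :
    sMul (alpha a b k) (alpha c d s) = alpha c d N := by
  rw [sMul_alpha, alpha_apply_of_le c d ha, alpha_apply_of_le c d hb, alpha_self, alpha_top]

theorem stmt12_general {a b : Fin N} (hab : a ≤ b) (c d : Fin N) (k s : ℕ) :
    (s ≤ N - (b : ℕ) - 1 → sMul (alpha a b k) (alpha c d s) = alpha c d 0) ∧
    (N - (b : ℕ) ≤ s → s ≤ N - (a : ℕ) - 1 →
      sMul (alpha a b k) (alpha c d s) = alpha c d k) ∧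
    (N - (a : ℕ) ≤ s → sMul (alpha a b k) (alpha c d s) = alpha c d N) := by
  refine ⟨fun hs => ?_, fun hbs hsa => ?_, fun hs => ?_⟩
  · exact sMul_alpha_alpha_of_lt_of_lt c d k (by omega) (by omega)
  · exact sMul_alpha_alpha_of_lt_of_le c d k (by omega) (by omega)
  · exact sMul_alpha_alpha_of_le_of_le c d k (by omega) (by omega)

end Alpha

/-- For all `ℓ, r ∈ {1,…,m−1}` and `k, s ∈ {0,…,n}`:
if `s ≤ n − a_{ℓ+1} − 1` then `α_{k,ℓ} · α_{s,r} = α_{0,r}`;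
if `n − a_{ℓ+1} ≤ s ≤ n − a_ℓ − 1` then `α_{k,ℓ} · α_{s,r} = α_{k,r}`;
and if `n − a_ℓ ≤ s ≤ n` then `α_{k,ℓ} · α_{s,r} = α_{n,r}`. -/
theorem stmt12 (n m : ℕ) (hm2 : 2 ≤ m) (hmn : m ≤ n)
    (a : ℕ → Fin n)
    (hmono : ∀ i j : ℕ, 1 ≤ i → i < j → j ≤ m → a i < a j)
    (k s ℓ r : ℕ) (hk : k ≤ n) (hs : s ≤ n)
    (hℓ1 : 1 ≤ ℓ) (hℓm : ℓ ≤ m - 1) (hr1 : 1 ≤ r) (hrm : r ≤ m - 1) :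
    (s ≤ n - (a (ℓ + 1) : ℕ) - 1 →
      sMul (alpha (a ℓ) (a (ℓ + 1)) k) (alpha (a r) (a (r + 1)) s) =
        alpha (a r) (a (r + 1)) 0) ∧
    (n - (a (ℓ + 1) : ℕ) ≤ s → s ≤ n - (a ℓ : ℕ) - 1 →
      sMul (alpha (a ℓ) (a (ℓ + 1)) k) (alpha (a r) (a (r + 1)) s) =
        alpha (a r) (a (r + 1)) k) ∧
    (n - (a ℓ : ℕ) ≤ s →
      sMul (alpha (a ℓ) (a (ℓ + 1)) k) (alpha (a r) (a (r + 1)) s) =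
        alpha (a r) (a (r + 1)) n) :=
  stmt12_general (hmono ℓ (ℓ + 1) hℓ1 (by omega) (by omega)).le (a r) (a (r + 1)) k s
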